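/- Let P_q be a Paley graph and k ∈ N₀ with k ≤ ⌊(√q+3)/2⌋. Then z_k(P_q) = ϑ(P_q) = √q, i.e., the k-th level of the exact subgraph hierarchy does not improve upon the Lovász theta function as an upper bound on α(P_q). -/

import Mathlib

open scoped Classical

/-- The Paley graph on a finite field: vertices are field elements, two vertices
adjacent iff their difference is a nonzero square. -/
def Paley (F : Type) [Field F] : SimpleGraph F :=
  SimpleGraph.fromRel (fun x y => ∃ z : F, z ≠ 0 ∧ x - y = z ^ 2)

/-- Feasibility for the SDP formulation ϑ₁:
max 1ᵀx s.t. [[X, x],[xᵀ,1]] ⪰ 0, diag(X) = x, X_{ij} = 0 on edges. -/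
def Theta1Feasible {V : Type} [Fintype V] (G : SimpleGraph V)
    (x : V → ℝ) (X : Matrix V V ℝ) : Prop :=
  (Matrix.fromBlocks X (Matrix.of fun i (_ : Unit) => x i)
      (Matrix.of fun (_ : Unit) j => x j) 1).PosSemidef ∧
  (∀ i, X i i = x i) ∧ (∀ i j, G.Adj i j → X i j = 0)

/-- The squared stable set polytope STAB²(H): the convex hull of the outer
products ssᵀ of incidence vectors s of stable sets of H. -/
def stab2 {W : Type} (H : SimpleGraph W) : Set (Matrix W W ℝ) :=
  convexHull ℝ {M | ∃ s : W → ℝ, (∀ i, s i = 0 ∨ s i = 1) ∧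
    (∀ i j, H.Adj i j → s i * s j = 0) ∧ M = Matrix.vecMulVec s s}

/-- The optimal value z_J(G) of the ϑ₁ SDP with the exact subgraph constraint
added for every vertex subset I ∈ J. -/
noncomputable def zJ {V : Type} [Fintype V] (G : SimpleGraph V) (J : Set (Set V)) : ℝ :=
  sSup {t | ∃ (x : V → ℝ) (X : Matrix V V ℝ), Theta1Feasible G x X ∧
    (∀ I ∈ J, X.submatrix (fun a : I => (a : V)) (fun a : I => (a : V)) ∈
      stab2 (G.induce I)) ∧
    t = ∑ i, x i}

/-- The k-th level z_k(G) of the exact subgraph hierarchy: exact subgraph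
constraints for all k-element vertex subsets (with the convention
z_k(G) = z_n(G) for k > n). -/
noncomputable def zk {V : Type} [Fintype V] (G : SimpleGraph V) (k : ℕ) : ℝ :=
  zJ G {I : Set V | I.ncard = min k (Fintype.card V)}

/-- The Lovász theta function of a graph. -/
noncomputable def lovaszTheta {V : Type} [Fintype V] (G : SimpleGraph V) : ℝ :=
  sSup {t | ∃ X : Matrix V V ℝ, X.PosSemidef ∧ X.trace = 1 ∧
    (∀ i j, G.Adj i j → X i j = 0) ∧ t = ∑ i, ∑ j, X i j}


open Matrix in
/-- Quadratic form of a real PSD matrix as a double sum. -/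
lemma psd_sum_nonneg {V : Type} [Fintype V] {X : Matrix V V ℝ} (hX : X.PosSemidef) (y : V → ℝ) :
    0 ≤ ∑ i, ∑ j, y i * X i j * y j := by
  have h := hX.dotProduct_mulVec_nonneg y
  have e : star y ⬝ᵥ (X *ᵥ y) = ∑ i, ∑ j, y i * X i j * y j := by
    simp only [dotProduct, mulVec, Finset.mul_sum, Pi.star_apply, star_trivial, mul_assoc]
  rwa [e] at h

/-- A symmetric `B` with `B * B = c • B`, `c > 0`, is PSD. -/
lemma psd_of_sq {V : Type} [Fintype V] {B : Matrix V V ℝ} {c : ℝ} (hc : 0 < c)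
    (hB : B.transpose = B) (hBB : B * B = c • B) : B.PosSemidef := by
  have h := Matrix.posSemidef_conjTranspose_mul_self B
  rw [Matrix.conjTranspose_eq_transpose_of_trivial, hB, hBB] at h
  have h2 := h.smul (inv_nonneg.mpr hc.le)
  rwa [smul_smul, inv_mul_cancel₀ hc.ne', one_smul] at h2

/-- Nonnegativity of the inner product with such a `B`. -/
lemma inner_nonneg_of_sq {V : Type} [Fintype V] {B X : Matrix V V ℝ} {c : ℝ} (hc : 0 < c)
    (hB : B.transpose = B) (hBB : B * B = c • B) (hX : X.PosSemidef) :
    0 ≤ ∑ i, ∑ j, B i j * X i j := by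
  have h1 : 0 ≤ ∑ l, ∑ i, ∑ j, B l i * X i j * B l j :=
    Finset.sum_nonneg fun l _ => psd_sum_nonneg hX (B l)
  have h2 : ∑ l, ∑ i, ∑ j, B l i * X i j * B l j = c * ∑ i, ∑ j, B i j * X i j := by
    rw [Finset.sum_comm, Finset.mul_sum]
    refine Finset.sum_congr rfl fun i _ => ?_
    rw [Finset.sum_comm, Finset.mul_sum]
    refine Finset.sum_congr rfl fun j _ => ?_
    have h3 := congrFun (congrFun hBB i) j
    rw [Matrix.mul_apply, Matrix.smul_apply, smul_eq_mul] at h3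
    rw [← mul_assoc, ← h3, Finset.sum_mul]
    refine Finset.sum_congr rfl fun l _ => ?_
    have h4 : B l i = B i l := congrFun (congrFun hB i) l
    rw [h4]; ring
  rw [h2] at h1
  exact nonneg_of_mul_nonneg_right h1 hc

/-- The matrix of the quadratic character. -/
noncomputable def chiMat (F : Type) [Field F] [Fintype F] : Matrix F F ℝ :=
  Matrix.of fun i j => ((quadraticChar F (i - j) : ℤ) : ℝ)

/-- The all-ones matrix. -/
def onesMat (F : Type) : Matrix F F ℝ := Matrix.of fun _ _ => 1

section field
variable {F : Type} [Field F] [Fintype F]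

lemma char_ne_two (hq : Fintype.card F % 4 = 1) : ringChar F ≠ 2 := by
  intro h
  have := FiniteField.even_card_of_char_two h
  omega

lemma chi_neg_one (hq : Fintype.card F % 4 = 1) : quadraticChar F (-1) = 1 := by
  rw [quadraticChar_one_iff_isSquare (neg_ne_zero.mpr one_ne_zero),
    FiniteField.isSquare_neg_one_iff]
  omega

lemma chi_neg (hq : Fintype.card F % 4 = 1) (a : F) :
    quadraticChar F (-a) = quadraticChar F a := by
  rw [neg_eq_neg_one_mul, map_mul, chi_neg_one hq, one_mul]

lemma chiMat_symm (hq : Fintype.card F % 4 = 1) : (chiMat F).transpose = chiMat F := by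
  ext i j
  simp only [chiMat, Matrix.transpose_apply, Matrix.of_apply]
  rw [← neg_sub, chi_neg hq]

lemma chi_corr (hq : Fintype.card F % 4 = 1) {i j : F} (hij : i ≠ j) :
    ∑ l, quadraticChar F (i - l) * quadraticChar F (l - j) = -1 := by
  have hd : i - j ≠ 0 := sub_ne_zero.mpr hij
  have hJ := jacobiSum_nontrivial_inv (quadraticChar_ne_one (char_ne_two hq))
  rw [(quadraticChar_isQuadratic F).inv, chi_neg_one hq, jacobiSum] at hJ
  rw [← hJ]
  symm
  refine Fintype.sum_equiv ((Equiv.mulLeft₀ (i - j) hd).trans (Equiv.addRight j)) _ _ fun x => ?_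
  have h1 : i - ((i - j) * x + j) = (i - j) * (1 - x) := by ring
  have h2 : (i - j) * x + j - j = (i - j) * x := by ring
  have h3 := quadraticChar_sq_one hd
  simp only [Equiv.trans_apply, Equiv.mulLeft₀_apply, Equiv.coe_addRight]
  rw [h1, h2, map_mul, map_mul]
  linear_combination (-(quadraticChar F x * quadraticChar F (1 - x))) * h3

lemma chiMat_sq (hq : Fintype.card F % 4 = 1) :
    chiMat F * chiMat F = (Fintype.card F : ℝ) • (1 : Matrix F F ℝ) - onesMat F := by
  ext i j
  simp only [chiMat, onesMat, Matrix.mul_apply, Matrix.of_apply, Matrix.sub_apply,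
    Matrix.smul_apply, smul_eq_mul]
  by_cases hij : i = j
  · subst hij
    have h : ∀ l, ((quadraticChar F (i - l) : ℤ) : ℝ) * ((quadraticChar F (l - i) : ℤ) : ℝ)
        = 1 - if l = i then 1 else 0 := by
      intro l
      by_cases hl : l = i
      · subst hl; simp
      · rw [← neg_sub l i, chi_neg hq, ← sq]
        have := quadraticChar_sq_one (sub_ne_zero.mpr hl)
        rw [if_neg hl]
        rw [sub_zero]
        exact_mod_cast this
    simp only [h]
    simp
  · have h := chi_corr hq hij
    rw [Matrix.one_apply_ne hij]
    have h' : ((∑ l, quadraticChar F (i - l) * quadraticChar F (l - j) : ℤ) : ℝ) = -1 := by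
      rw [h]; norm_num
    push_cast at h'
    rw [h']; norm_num

lemma chiMat_ones (hq : Fintype.card F % 4 = 1) : chiMat F * onesMat F = 0 := by
  ext i j
  simp only [chiMat, onesMat, Matrix.mul_apply, Matrix.of_apply, mul_one, Matrix.zero_apply]
  have h := quadraticChar_sum_zero (char_ne_two hq)
  have h2 : ∑ l, quadraticChar F (i - l) = 0 := by
    rw [← h]
    exact Fintype.sum_equiv (Equiv.subLeft i) _ _ fun x => rfl
  exact_mod_cast h2

lemma ones_chiMat (hq : Fintype.card F % 4 = 1) : onesMat F * chiMat F = 0 := by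
  have h := congrArg Matrix.transpose (chiMat_ones (F := F) hq)
  have hJ : (onesMat F).transpose = onesMat F := rfl
  rw [Matrix.transpose_mul, chiMat_symm hq, hJ, Matrix.transpose_zero] at h
  exact h

lemma ones_ones : onesMat F * onesMat F = (Fintype.card F : ℝ) • onesMat F := by
  ext i j
  simp [onesMat, Matrix.mul_apply]

/-- The scaled projections onto the nontrivial eigenspaces. -/
noncomputable def projMat (F : Type) [Field F] [Fintype F] (s e : ℝ) : Matrix F F ℝ :=
  s • (1 : Matrix F F ℝ) + e • chiMat F - s⁻¹ • onesMat F

lemma projMat_symm (hq : Fintype.card F % 4 = 1) (s e : ℝ) :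
    (projMat F s e).transpose = projMat F s e := by
  have : (onesMat F).transpose = onesMat F := rfl
  simp [projMat, chiMat_symm hq, this]

lemma projMat_sq (hq : Fintype.card F % 4 = 1) {s e : ℝ} (hs : 0 < s)
    (hsq : s ^ 2 = Fintype.card F) (he : e ^ 2 = 1) :
    projMat F s e * projMat F s e = (2 * s) • projMat F s e := by
  simp only [projMat, add_mul, mul_add, sub_mul, mul_sub, smul_mul_assoc, mul_smul_comm,
    chiMat_sq hq, chiMat_ones hq, ones_chiMat hq, ones_ones, one_mul, mul_one, smul_zero,
    ← hsq]
  ext i j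
  simp only [Matrix.add_apply, Matrix.sub_apply, Matrix.smul_apply, smul_eq_mul, Matrix.zero_apply]
  field_simp
  linear_combination s * (s ^ 2 * (1 : Matrix F F ℝ) i j - onesMat F i j) * he

lemma paley_adj_chi (hq : Fintype.card F % 4 = 1) {i j : F} (hij : i ≠ j) :
    (Paley F).Adj i j ↔ quadraticChar F (i - j) = 1 := by
  have hd : i - j ≠ 0 := sub_ne_zero.mpr hij
  have key : ∀ a : F, a ≠ 0 → ((∃ z : F, z ≠ 0 ∧ a = z ^ 2) ↔ quadraticChar F a = 1) := by
    intro a ha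
    rw [quadraticChar_one_iff_isSquare ha, isSquare_iff_exists_sq]
    constructor
    · rintro ⟨z, -, h⟩; exact ⟨z, h⟩
    · rintro ⟨z, h⟩
      refine ⟨z, ?_, h⟩
      rintro rfl
      exact ha (by simpa using h)
  simp only [Paley, SimpleGraph.fromRel_adj]
  rw [key _ hd, key _ (sub_ne_zero.mpr hij.symm), ← neg_sub i j, chi_neg hq]
  simp [hij]

lemma chiMat_diag (i : F) : chiMat F i i = 0 := by simp [chiMat]

lemma chiMat_adj (hq : Fintype.card F % 4 = 1) {i j : F} (h : (Paley F).Adj i j) :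
    chiMat F i j = 1 := by
  have := (paley_adj_chi hq h.ne).1 h
  simp only [chiMat, Matrix.of_apply, this]
  norm_num

lemma chiMat_nadj (hq : Fintype.card F % 4 = 1) {i j : F} (hij : i ≠ j)
    (h : ¬ (Paley F).Adj i j) : chiMat F i j = -1 := by
  rw [paley_adj_chi hq hij] at h
  have := (quadraticChar_eq_neg_one_iff_not_one (sub_ne_zero.mpr hij)).2 h
  simp only [chiMat, Matrix.of_apply, this]
  norm_num

/-- Dual bound: total sum at most `s` times the trace. -/
lemma sum_le_trace (hq : Fintype.card F % 4 = 1) {s : ℝ} (hs : 0 < s)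
    (hsq : s ^ 2 = Fintype.card F) {X : Matrix F F ℝ} (hX : X.PosSemidef)
    (hE : ∀ i j, (Paley F).Adj i j → X i j = 0) :
    ∑ i, ∑ j, X i j ≤ s * ∑ i, X i i := by
  have h := inner_nonneg_of_sq (by positivity) (projMat_symm hq s 1)
    (projMat_sq hq hs hsq (by norm_num)) hX
  have e : ∀ i j, projMat F s 1 i j * X i j
      = ((s + 1) / s) * ((if i = j then s * X i j else 0) - X i j) := by
    intro i j
    by_cases hij : i = j
    · subst hij
      simp [projMat, chiMat_diag, onesMat]
      field_simp
      ring
    · by_cases ha : (Paley F).Adj i j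
      · rw [hE i j ha]; simp
      · simp [projMat, chiMat_nadj hq hij ha, onesMat, hij, Matrix.one_apply_ne hij]
        field_simp
        ring
  simp only [e, ← Finset.mul_sum, Finset.sum_sub_distrib] at h
  have h' := nonneg_of_mul_nonneg_right h (by positivity)
  simp only [Finset.sum_ite_eq, Finset.mem_univ, if_true, ← Finset.mul_sum] at h'
  linarith

/-- The optimal primal solution. -/
noncomputable def optMat (F : Type) [Field F] [Fintype F] (s : ℝ) : Matrix F F ℝ :=
  (s * (s + 1))⁻¹ • (s • (1 : Matrix F F ℝ) + onesMat F - chiMat F)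

lemma optMat_eq {s : ℝ} (hs : 0 < s) :
    optMat F s = (s * (s + 1))⁻¹ • projMat F s (-1) + (s ^ 2)⁻¹ • onesMat F := by
  ext i j
  simp only [optMat, projMat, Matrix.add_apply, Matrix.sub_apply, Matrix.smul_apply, smul_eq_mul]
  field_simp
  ring

lemma optMat_diag {s : ℝ} (hs : 0 < s) (i : F) : optMat F s i i = s⁻¹ := by
  simp [optMat, chiMat_diag, onesMat]
  field_simp

lemma optMat_adj (hq : Fintype.card F % 4 = 1) {s : ℝ} {i j : F} (h : (Paley F).Adj i j) :
    optMat F s i j = 0 := by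
  simp [optMat, chiMat_adj hq h, onesMat, Matrix.one_apply_ne h.ne]

lemma optMat_nadj (hq : Fintype.card F % 4 = 1) {s : ℝ} {i j : F} (hij : i ≠ j)
    (h : ¬ (Paley F).Adj i j) : optMat F s i j = 2 * (s * (s + 1))⁻¹ := by
  simp [optMat, chiMat_nadj hq hij h, onesMat, Matrix.one_apply_ne hij]
  ring

lemma optMat_sum (hq : Fintype.card F % 4 = 1) {s : ℝ} (hs : 0 < s)
    (hsq : s ^ 2 = Fintype.card F) : ∑ i, ∑ j, optMat F s i j = s ^ 2 := by
  have hrow : ∀ i, ∑ j, chiMat F i j = 0 := by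
    intro i
    have := congrFun (congrFun (chiMat_ones (F := F) hq) i) i
    simpa [Matrix.mul_apply, onesMat] using this
  have : ∀ i, ∑ j, optMat F s i j = 1 := by
    intro i
    simp only [optMat, Matrix.smul_apply, Matrix.sub_apply, Matrix.add_apply, smul_eq_mul,
      ← Finset.mul_sum, Finset.sum_sub_distrib, Finset.sum_add_distrib, hrow]
    simp [onesMat, Matrix.one_apply, ← hsq]
    field_simp
    ring
  simp [this, hsq]

lemma ones_psd : (onesMat F).PosSemidef := by
  have h := Matrix.posSemidef_vecMulVec_self_star (fun _ : F => (1 : ℝ))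
  convert h using 1
  ext i j
  simp [onesMat, Matrix.vecMulVec_apply]

lemma optMat_feasible (hq : Fintype.card F % 4 = 1) {s : ℝ} (hs : 0 < s)
    (hsq : s ^ 2 = Fintype.card F) :
    Theta1Feasible (Paley F) (fun _ => s⁻¹) (optMat F s) := by
  refine ⟨?_, optMat_diag hs, fun i j h => optMat_adj hq h⟩
  have hP := psd_of_sq (by positivity) (projMat_symm hq s (-1))
    (projMat_sq hq hs hsq (by norm_num))
  have hP2 := hP.smul (show (0 : ℝ) ≤ (s * (s + 1))⁻¹ by positivity)
  let _ : Invertible (1 : Matrix Unit Unit ℝ) := invertibleOne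
  have key := (Matrix.PosDef.fromBlocks₂₂ (optMat F s)
    (Matrix.of fun (_ : F) (_ : Unit) => s⁻¹) (D := (1 : Matrix Unit Unit ℝ)) Matrix.PosDef.one)
  have e1 : optMat F s - (Matrix.of fun (_ : F) (_ : Unit) => s⁻¹) * (1 : Matrix Unit Unit ℝ)⁻¹ *
      (Matrix.of fun (_ : F) (_ : Unit) => s⁻¹).conjTranspose
      = (s * (s + 1))⁻¹ • projMat F s (-1) := by
    rw [optMat_eq hs, inv_one, Matrix.mul_one]
    ext i j
    simp [Matrix.mul_apply, onesMat]
    field_simp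
    ring
  rw [e1] at key
  exact key.2 hP2

end field

/-- Membership in `stab2` for uniform matrices of small order. -/
lemma mem_stab2_uniform {W : Type} [Fintype W] (H : SimpleGraph W) (Y : Matrix W W ℝ) (a c : ℝ)
    (hc : 0 ≤ c) (hdiag : ∀ i, Y i i = a) (hadj : ∀ i j, H.Adj i j → Y i j = 0)
    (hn : ∀ i j, i ≠ j → ¬ H.Adj i j → Y i j = c)
    (hca : c * (Fintype.card W - 1) ≤ a) (hka : Fintype.card W * a ≤ 1) :
    Y ∈ stab2 H := by
  let n : W → W → ℝ := fun i j => if i ≠ j ∧ ¬ H.Adj i j then 1 else 0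
  have hn0 : ∀ i j, 0 ≤ n i j := fun i j => by dsimp [n]; split_ifs <;> norm_num
  have hnsymm : ∀ i j, n i j = n j i := fun i j => by
    simp only [n, H.adj_comm i j, ne_comm (a := i) (b := j)]
  let d : W → ℝ := fun i => ∑ j, n i j
  have hd : ∀ i, d i ≤ Fintype.card W - 1 := by
    intro i
    have h1 : ∀ j, n i j ≤ 1 - if i = j then 1 else 0 := by
      intro j
      dsimp [n]
      by_cases h : i = j
      · simp [h]
      · rw [if_neg h, sub_zero]; split_ifs <;> norm_num
    have h2 : d i ≤ ∑ j : W, ((1 : ℝ) - if i = j then 1 else 0) :=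
      Finset.sum_le_sum fun j _ => h1 j
    simpa [Finset.sum_sub_distrib] using h2
  have hd0 : ∀ i, 0 ≤ d i := fun i => Finset.sum_nonneg fun j _ => hn0 i j
  let e : W → W → ℝ := fun i u => if u = i then 1 else 0
  let w : Option (W ⊕ W × W) → ℝ := fun o => match o with
    | none => 1 - ((∑ i, (a - c * d i)) + ∑ i, ∑ j, c / 2 * n i j)
    | some (Sum.inl i) => a - c * d i
    | some (Sum.inr (i, j)) => c / 2 * n i j
  let v : Option (W ⊕ W × W) → W → ℝ := fun o => match o with
    | none => 0
    | some (Sum.inl i) => e i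
    | some (Sum.inr (i, j)) => n i j • (e i + e j)
  have hw0 : ∀ o, 0 ≤ w o := by
    rintro (_ | i | ⟨i, j⟩)
    · have h1 : (∑ i, (a - c * d i)) + ∑ i, ∑ j, c / 2 * n i j ≤ ∑ _i : W, a := by
        rw [← Finset.sum_add_distrib]
        refine Finset.sum_le_sum fun i _ => ?_
        rw [← Finset.mul_sum]
        change a - c * d i + c / 2 * d i ≤ a
        nlinarith [mul_nonneg hc (hd0 i)]
      simp only [Finset.sum_const, Finset.card_univ, nsmul_eq_mul] at h1
      simp only [w]
      linarith
    · simp only [w]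
      nlinarith [mul_le_mul_of_nonneg_left (hd i) hc]
    · simp only [w]
      have := hn0 i j
      positivity
  have hw1 : ∑ o, w o = 1 := by
    simp only [Fintype.sum_option, Fintype.sum_sum_type, Fintype.sum_prod_type, w]
    ring
  have hmem : ∀ o, Matrix.vecMulVec (v o) (v o) ∈ stab2 H := by
    intro o
    refine subset_convexHull ℝ _ ⟨v o, ?_, ?_, rfl⟩
    · rcases o with (_ | i | ⟨i, j⟩)
      · intro u; simp [v]
      · intro u; simp only [v, e]; split_ifs <;> simp
      · intro u
        simp only [v, e, n, Pi.smul_apply, Pi.add_apply, smul_eq_mul]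
        by_cases h : i ≠ j ∧ ¬ H.Adj i j
        · rw [if_pos h]
          by_cases h1 : u = i
          · have : u ≠ j := fun h2 => h.1 (h1.symm.trans h2)
            simp [h1, h.1]
          · rw [if_neg h1]
            by_cases h2 : u = j <;> simp [h2]
        · rw [if_neg h]; simp
    · rcases o with (_ | i | ⟨i, j⟩)
      · intro u u' _; simp [v]
      · intro u u' hu
        simp only [v, e]
        by_cases h1 : u = i
        · have : u' ≠ i := fun h2 => hu.ne (h1.trans h2.symm)
          simp [this]
        · simp [h1]
      · intro u u' hu
        simp only [v, e, n, Pi.smul_apply, Pi.add_apply, smul_eq_mul]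
        by_cases h : i ≠ j ∧ ¬ H.Adj i j
        · have hne := hu.ne
          have h' : ¬ H.Adj j i := fun h3 => h.2 h3.symm
          by_cases h1 : u = i <;> by_cases h2 : u = j <;> by_cases h3 : u' = i <;>
            by_cases h4 : u' = j <;> simp_all
        · rw [if_neg h]; simp
  have hY : Y = ∑ o, w o • Matrix.vecMulVec (v o) (v o) := by
    ext u u'
    have hterm : ∀ i j, c / 2 * n i j * (n i j * (e i u + e j u) * (n i j * (e i u' + e j u')))
        = c / 2 * (n i j * (e i u * e i u') + n i j * (e i u * e j u')
          + n i j * (e j u * e i u') + n i j * (e j u * e j u')) := by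
      intro i j
      have h3 : n i j * n i j = n i j := by dsimp [n]; split_ifs <;> norm_num
      linear_combination (c / 2 * (e i u + e j u) * (e i u' + e j u') * (n i j + 1)) * h3
    simp only [Matrix.sum_apply, Matrix.smul_apply, Matrix.vecMulVec_apply, smul_eq_mul,
      Fintype.sum_option, Fintype.sum_sum_type, Fintype.sum_prod_type, w, v, Pi.smul_apply,
      Pi.add_apply, Pi.zero_apply, mul_zero, zero_add, hterm, ← Finset.mul_sum,
      Finset.sum_add_distrib]
    have s1 : ∑ i, (a - c * d i) * (e i u * e i u') = if u = u' then a - c * d u else 0 := by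
      simp only [e]
      by_cases h : u = u' <;> simp [h]
    have s2 : ∑ i, ∑ j, n i j * (e i u * e i u') = if u = u' then d u else 0 := by
      simp only [← Finset.sum_mul]
      change ∑ i, d i * (e i u * e i u') = _
      simp only [e]
      by_cases h : u = u' <;> simp [h]
    have s3 : ∑ i, ∑ j, n i j * (e i u * e j u') = n u u' := by
      simp [e]
    have s4 : ∑ i, ∑ j, n i j * (e j u * e i u') = n u u' := by
      rw [hnsymm]
      simp [e]
    have s5 : ∑ i, ∑ j, n i j * (e j u * e j u') = if u = u' then d u else 0 := by
      rw [Finset.sum_comm, ← s2]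
      refine Finset.sum_congr rfl fun i _ => Finset.sum_congr rfl fun j _ => ?_
      rw [hnsymm]
    rw [s1, s2, s3, s4, s5]
    by_cases h : u = u'
    · subst h
      rw [hdiag]
      simp [n]
      ring
    · by_cases h2 : H.Adj u u'
      · rw [hadj _ _ h2]; simp [h, n, h2]
      · rw [hn _ _ h h2]; simp [h, n, h2]; ring
  rw [hY]
  exact (convex_convexHull ℝ _).sum_mem (fun o _ => hw0 o) hw1 (fun o _ => hmem o)

/-- The value of a feasible solution of the first SDP is at most `s`. -/
lemma feasible_le {F : Type} [Field F] [Fintype F] (hq : Fintype.card F % 4 = 1) {s : ℝ}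
    (hs : 0 < s) (hsq : s ^ 2 = Fintype.card F) {x : F → ℝ} {X : Matrix F F ℝ}
    (h : Theta1Feasible (Paley F) x X) : ∑ i, x i ≤ s := by
  obtain ⟨hp, hd, hE⟩ := h
  have hX : X.PosSemidef := by
    have := hp.submatrix (Sum.inl : F → F ⊕ Unit)
    exact this
  have h1 := sum_le_trace hq hs hsq hX hE
  simp only [hd] at h1
  have h2 := psd_sum_nonneg hp (Sum.elim (fun _ => 1) (fun _ => -s))
  simp [Fintype.sum_sum_type, Finset.sum_add_distrib, ← Finset.sum_mul, ← Finset.mul_sum] at h2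
  nlinarith

theorem stmt12 (q : ℕ) (F : Type) [Field F] [Fintype F]
    (hcard : Fintype.card F = q) (hq : q % 4 = 1)
    (k : ℕ) (hk : (k : ℤ) ≤ ⌊(Real.sqrt q + 3) / 2⌋) :
    zk (Paley F) k = lovaszTheta (Paley F) ∧
      lovaszTheta (Paley F) = Real.sqrt q := by
  subst hcard
  set s := Real.sqrt (Fintype.card F : ℝ) with hsdef
  have hsq : s ^ 2 = Fintype.card F := Real.sq_sqrt (Nat.cast_nonneg _)
  have h5 : 5 ≤ Fintype.card F := by
    have := Fintype.one_lt_card (α := F)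
    omega
  have h5' : (5 : ℝ) ≤ s ^ 2 := by rw [hsq]; exact_mod_cast h5
  have hs0 : 0 ≤ s := Real.sqrt_nonneg _
  have hs2 : 2 < s := by nlinarith
  have hs : 0 < s := by linarith
  have hkr : (k : ℝ) ≤ (s + 3) / 2 := by
    have := Int.le_floor.1 hk
    exact_mod_cast this
  have hks : (k : ℝ) ≤ s := by
    by_cases h3 : 3 ≤ s
    · linarith
    · have : (k : ℝ) < 3 := by linarith
      have h4 : k < 3 := by exact_mod_cast this
      have h6 : (k : ℝ) ≤ 2 := by exact_mod_cast (by omega : k ≤ 2)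
      linarith
  have htheta : lovaszTheta (Paley F) = s := by
    refine IsGreatest.csSup_eq ⟨?_, ?_⟩
    · refine ⟨s⁻¹ • optMat F s, ?_, ?_, ?_, ?_⟩
      · refine Matrix.PosSemidef.smul ?_ (by positivity)
        rw [optMat_eq hs]
        exact ((psd_of_sq (by positivity) (projMat_symm hq s (-1))
          (projMat_sq hq hs hsq (by norm_num))).smul (by positivity)).add
          (ones_psd.smul (by positivity))
      · simp only [Matrix.trace, Matrix.diag_apply, Matrix.smul_apply, optMat_diag hs]
        simp [← hsq]
        field_simp
      · intro i j h
        simp [optMat_adj hq h]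
      · simp only [Matrix.smul_apply, smul_eq_mul, ← Finset.mul_sum, optMat_sum hq hs hsq]
        field_simp
    · rintro t ⟨X, hX, htr, hE, rfl⟩
      have := sum_le_trace hq hs hsq hX hE
      have h2 : ∑ i, X i i = 1 := htr
      rw [h2] at this
      linarith
  refine ⟨?_, htheta⟩
  rw [htheta]
  refine IsGreatest.csSup_eq ⟨?_, ?_⟩
  · refine ⟨fun _ => s⁻¹, optMat F s, optMat_feasible hq hs hsq, ?_, ?_⟩
    · intro I hI
      have hI' : I.ncard = min k (Fintype.card F) := hI
      have hcI : (Fintype.card I : ℝ) ≤ k := by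
        rw [← Nat.card_eq_fintype_card, Nat.card_coe_set_eq, hI']
        exact_mod_cast min_le_left _ _
      refine mem_stab2_uniform _ _ s⁻¹ (2 * (s * (s + 1))⁻¹) (by positivity) ?_ ?_ ?_ ?_ ?_
      · intro i; exact optMat_diag hs _
      · intro i j h; exact optMat_adj hq h
      · intro i j hij h
        exact optMat_nadj hq (fun h' => hij (Subtype.ext h')) h
      · have : (Fintype.card I : ℝ) - 1 ≤ (s + 1) / 2 := by linarith
        calc 2 * (s * (s + 1))⁻¹ * ((Fintype.card I : ℝ) - 1)
            ≤ 2 * (s * (s + 1))⁻¹ * ((s + 1) / 2) := by gcongr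
          _ = s⁻¹ := by field_simp
      · rw [← div_eq_mul_inv, div_le_one hs]
        linarith
    · simp [← hsq]
      field_simp
  · rintro t ⟨x, X, hf, -, rfl⟩
    exact feasible_le hq hs hsq hf
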